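/- arXiv:0905.4441 — 2 statements merged into one kernel-verified Lean document; each statement's English description precedes it below -/
import Mathlib

section
/- Let d ≥ 1, let P be a finite set of at least 2 points in Euclidean space ℝ^d, and for each p ∈ P let r_p = min{dist(p,q) : q ∈ P, q ≠ p}. Then for every point q ∈ ℝ^d, the number of points p ∈ P with dist(p,q) ≤ r_p (i.e. the number of reverse nearest neighbors of q in P) is at most 2 · 5^d. -/
open Metric Set

/-!
Seen from the query point `q`, two reverse nearest neighbors are at least as far from each other as
each of them is from `q`. By the triangle inequality, projecting them radially onto the unit sphere
around `q` therefore yields points at mutual distance at least `1`, and by a volume argument a ball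
of radius `2` contains at most `5 ^ d` such points.
-/

open NormedSpace Module

section Normalize

variable {E : Type*} [NormedAddCommGroup E] [NormedSpace ℝ E]

lemma norm_normalize_le_one (x : E) : ‖normalize x‖ ≤ 1 := by
  obtain rfl | hx := eq_or_ne x 0
  · simp
  · exact (norm_normalize hx).le

lemma norm_sub_le_norm_mul_norm_normalize_sub_normalize_add (x y : E) :
    ‖x - y‖ ≤ ‖x‖ * ‖normalize x - normalize y‖ + |‖x‖ - ‖y‖| := by
  have decomposition :
      x - y = ‖x‖ • (normalize x - normalize y) + (‖x‖ - ‖y‖) • normalize y := by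
    simp only [smul_sub, sub_smul, norm_smul_normalize, sub_add_sub_cancel]
  calc ‖x - y‖
      ≤ ‖x‖ * ‖normalize x - normalize y‖ + |‖x‖ - ‖y‖| * ‖normalize y‖ := by
        rw [decomposition]
        refine (norm_add_le _ _).trans_eq ?_
        rw [norm_smul, norm_smul, norm_norm, Real.norm_eq_abs]
    _ ≤ ‖x‖ * ‖normalize x - normalize y‖ + |‖x‖ - ‖y‖| := by
        gcongr
        exact mul_le_of_le_one_right (abs_nonneg _) (norm_normalize_le_one y)

lemma one_le_norm_normalize_sub_normalize {x y : E} (hxy : x ≠ y)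
    (hx : ‖x‖ ≤ ‖x - y‖) (hy : ‖y‖ ≤ ‖x - y‖) : 1 ≤ ‖normalize x - normalize y‖ := by
  wlog hle : ‖x‖ ≤ ‖y‖ generalizing x y
  · rw [norm_sub_rev] at hx hy ⊢
    exact this hxy.symm hy hx (le_of_not_ge hle)
  obtain rfl | hx0 := eq_or_ne x 0
  · rw [normalize_zero_eq_zero, zero_sub, norm_neg, norm_normalize hxy.symm]
  have h := norm_sub_le_norm_mul_norm_normalize_sub_normalize_add x y
  rw [abs_sub_comm, abs_of_nonneg (sub_nonneg.2 hle)] at h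
  exact (le_mul_iff_one_le_right (norm_pos_iff.2 hx0)).1 (by linarith)

end Normalize

lemma encard_le_coe_of_forall_finset_card_le {α : Type*} {s : Set α} {n : ℕ}
    (h : ∀ t : Finset α, ↑t ⊆ s → t.card ≤ n) : s.encard ≤ n := by
  by_contra! hlt
  obtain ⟨t, hts, ht⟩ := exists_subset_encard_eq (Order.add_one_le_of_lt hlt)
  lift t to Finset α using finite_of_encard_eq_coe (k := n + 1) (mod_cast ht)
  have hcard : t.card = n + 1 := by exact_mod_cast ht
  exact (h t hts).not_gt (by lia)

section FiniteDimensional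

variable {E : Type*} [NormedAddCommGroup E] [NormedSpace ℝ E] [FiniteDimensional ℝ E]

lemma encard_le_of_pairwise_one_le_norm_sub {ι : Type*} {s : Set ι} {f : ι → E}
    (hf : ∀ i ∈ s, ‖f i‖ ≤ 2) (hsep : s.Pairwise fun i j ↦ 1 ≤ ‖f i - f j‖) :
    s.encard ≤ (5 ^ finrank ℝ E : ℕ) := by
  classical
  have hinj : InjOn f s := fun i hi j hj hij ↦ by
    by_contra hne
    have := hsep hi hj hne
    norm_num [hij] at this
  refine encard_le_coe_of_forall_finset_card_le fun t hts ↦ ?_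
  rw [← Finset.card_image_of_injOn (hinj.mono hts)]
  apply Besicovitch.card_le_of_separated
  · exact Finset.forall_mem_image.2 fun i hi ↦ hf i (hts hi)
  · exact Finset.forall_mem_image.2 fun i hi ↦ Finset.forall_mem_image.2 fun j hj hij ↦
      hsep (hts hi) (hts hj) (ne_of_apply_ne f hij)

lemma encard_le_of_pairwise_dist_le_dist {s : Set E} {q : E}
    (hs : s.Pairwise fun p p' ↦ dist p q ≤ dist p p') :
    s.encard ≤ (5 ^ finrank ℝ E : ℕ) := by
  refine encard_le_of_pairwise_one_le_norm_sub (f := fun p ↦ normalize (p - q))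
    (fun p _ ↦ (norm_normalize_le_one _).trans one_le_two) fun p hp p' hp' hne ↦ ?_
  apply one_le_norm_normalize_sub_normalize (sub_left_injective.ne hne)
  · simpa only [sub_sub_sub_cancel_right, dist_eq_norm] using hs hp hp' hne
  · simpa only [sub_sub_sub_cancel_right, dist_eq_norm, norm_sub_rev p p'] using
      hs hp' hp hne.symm

theorem reverse_nearest_neighbors_card_le_general (P : Set E) (rp : E → ℝ)
    (hrp : ∀ p ∈ P, IsGLB (dist p '' (P \ {p})) (rp p)) (q : E) :
    {p ∈ P | dist p q ≤ rp p}.encard ≤ (5 ^ finrank ℝ E : ℕ) :=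
  encard_le_of_pairwise_dist_le_dist fun p hp _ hp' hne ↦
    hp.2.trans ((hrp p hp.1).1 (mem_image_of_mem _ ⟨hp'.1, hne.symm⟩))

end FiniteDimensional

/-- Any query point `q` has at most `2 · 5^d` reverse nearest neighbors
in a finite point set `P ⊆ ℝ^d` with at least two points. -/
theorem reverse_nearest_neighbors_card_le (d : ℕ) (hd : 1 ≤ d)
    (P : Set (EuclideanSpace ℝ (Fin d))) (hPfin : P.Finite) (hP : 2 ≤ P.ncard)
    (rp : EuclideanSpace ℝ (Fin d) → ℝ)
    (hrp : ∀ p ∈ P, IsLeast ((dist p) '' (P \ {p})) (rp p))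
    (q : EuclideanSpace ℝ (Fin d)) :
    {p ∈ P | dist p q ≤ rp p}.ncard ≤ 2 * 5 ^ d := by
  have h := reverse_nearest_neighbors_card_le_general P rp (fun p hp ↦ (hrp p hp).isGLB) q
  rw [finrank_euclideanSpace_fin] at h
  exact (encard_le_coe_iff_finite_ncard_le.1 h).2.trans (Nat.le_mul_of_pos_left _ two_pos)
end

section
/- Let d ≥ 1, let P be a finite set of at least 2 points in Euclidean space ℝ^d, and for each p ∈ P let r_p = min{dist(p,q) : q ∈ P, q ≠ p} and let b_p be the closed ball of radius r_p centered at p. Let C = ∏_{i=1}^d [a_i, a_i + s] be an axis-aligned cube of side length s > 0. Then the number of points p ∈ P such that r_p > s/4 and the empty ball b_p intersects C is at most 2 · 5^d · ⌈2√d⌉^d. -/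
open Metric Set

/-!
Call the points being counted candidates, and cover the cube by `⌈2√d⌉ ^ d` balls of radius
`w = s / 4`. It suffices to show that at most `5 ^ d` candidates `p` have an empty ball meeting a
fixed `closedBall c w`. Such a `p` satisfies `dist p c ≤ r p + w`, so if its distance `t` to `c`
exceeds `2 * w`, all other candidates are at distance at least `t - w` from it. Hence pulling the
far candidates radially back to the sphere of radius `2 * w` around `c`, and leaving the near ones
in place, keeps all of them at mutual distance at least `w`. A volume comparison bounds the number
of `w`-separated points in a ball of radius `2 * w` by `5 ^ d`; treating near and far candidates
together saves the factor `2`.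
-/

section RadialRetraction

variable {E : Type*} [NormedAddCommGroup E] [NormedSpace ℝ E]

/-- The radial retraction of a normed space onto its closed ball of radius `R` about the origin,
used to bring far points close to the center of a ball. The factor `R / max R ‖x‖` is `1` inside
that ball and `R / ‖x‖` outside, so one formula covers both cases. -/
noncomputable def radialRetraction (R : ℝ) (x : E) : E :=
  (R / max R ‖x‖) • x

lemma norm_radialRetraction_le {R : ℝ} (hR : 0 < R) (x : E) : ‖radialRetraction R x‖ ≤ R := by
  have hM : 0 < max R ‖x‖ := lt_max_of_lt_left hR
  calc ‖radialRetraction R x‖ = R / max R ‖x‖ * ‖x‖ := by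
        rw [radialRetraction, norm_smul, Real.norm_of_nonneg (by positivity)]
    _ ≤ R / max R ‖x‖ * max R ‖x‖ := by gcongr; exact le_max_right _ _
    _ = R := div_mul_cancel₀ _ hM.ne'

lemma sub_le_dist_radialRetraction {R δ : ℝ} (hR : 0 < R) (hδ : 0 ≤ δ) {x y : E}
    (hx : max R ‖x‖ - δ ≤ dist x y) (hy : max R ‖y‖ - δ ≤ dist x y) :
    R - δ ≤ dist (radialRetraction R x) (radialRetraction R y) := by
  wlog hyx : ‖y‖ ≤ ‖x‖ generalizing x y
  · rw [dist_comm] at hx hy ⊢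
    exact this hy hx (le_of_not_ge hyx)
  have hRm : R ≤ max R ‖y‖ := le_max_left _ _
  have hmM : max R ‖y‖ ≤ max R ‖x‖ := max_le_max_left R hyx
  have hxM : ‖x‖ ≤ max R ‖x‖ := le_max_right _ _
  rw [dist_eq_norm] at hx
  simp only [dist_eq_norm, radialRetraction]
  generalize max R ‖x‖ = M at *
  generalize max R ‖y‖ = m at *
  have hm : 0 < m := hR.trans_le hRm
  have hM : 0 < M := hm.trans_le hmM
  -- Retract `x` only to the scale `m` of `y` first; what remains scales both points by `R / m`.
  have shrink : ‖x - (m / M) • x‖ ≤ M - m := by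
    have hratio : 0 ≤ 1 - m / M := sub_nonneg.2 ((div_le_one hM).2 hmM)
    calc ‖x - (m / M) • x‖ = (1 - m / M) * ‖x‖ := by
          rw [← Real.norm_of_nonneg hratio, ← norm_smul, sub_smul, one_smul]
      _ ≤ (1 - m / M) * M := by gcongr
      _ = M - m := by field_simp
  have separated : m - δ ≤ ‖(m / M) • x - y‖ := by
    linarith [norm_sub_le_norm_sub_add_norm_sub x ((m / M) • x) y]
  calc R - δ ≤ R - R / m * δ := by
        gcongr
        exact mul_le_of_le_one_left hδ ((div_le_one hm).2 hRm)
    _ = R / m * (m - δ) := by field_simp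
    _ ≤ R / m * ‖(m / M) • x - y‖ := by gcongr
    _ = ‖(R / m) • ((m / M) • x - y)‖ := by
        rw [norm_smul, Real.norm_of_nonneg (by positivity)]
    _ = ‖(R / M) • x - (R / m) • y‖ := by
        rw [smul_sub, smul_smul, div_mul_div_cancel₀ hm.ne']

end RadialRetraction

section Packing

variable {E : Type*} [NormedAddCommGroup E] [NormedSpace ℝ E] [FiniteDimensional ℝ E]

lemma encard_le_five_pow_of_one_le_dist {T : Set E} (hT : ∀ x ∈ T, ‖x‖ ≤ 2)
    (hsep : T.Pairwise fun x y ↦ 1 ≤ dist x y) : T.encard ≤ 5 ^ Module.finrank ℝ E := by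
  by_contra! hlt
  obtain ⟨U, hUT, hU⟩ := exists_subset_encard_eq (Order.add_one_le_of_lt hlt)
  have hUfin : U.Finite := finite_of_encard_eq_coe (k := 5 ^ Module.finrank ℝ E + 1) (mod_cast hU)
  lift U to Finset E using hUfin
  have hcard : U.card ≤ 5 ^ Module.finrank ℝ E :=
    Besicovitch.card_le_of_separated U (fun x hx ↦ hT x (hUT hx)) fun x hx y hy hxy ↦
      dist_eq_norm x y ▸ hsep (hUT hx) (hUT hy) hxy
  rw [encard_coe_eq_coe_finsetCard] at hU
  norm_cast at hU
  omega

lemma encard_le_five_pow_of_le_dist {ι : Type*} {S : Set ι} {f : ι → E} {w : ℝ}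
    (hw : 0 < w) (hf : ∀ p ∈ S, ‖f p‖ ≤ 2 * w)
    (hsep : S.Pairwise fun p q ↦ w ≤ dist (f p) (f q)) :
    S.encard ≤ 5 ^ Module.finrank ℝ E := by
  have hunit : S.Pairwise fun p q ↦ 1 ≤ dist (w⁻¹ • f p) (w⁻¹ • f q) := hsep.imp fun _ _ h ↦ by
    rwa [dist_smul₀, Real.norm_of_nonneg (by positivity), inv_mul_eq_div, one_le_div hw]
  have hinj : InjOn (fun p ↦ w⁻¹ • f p) S := fun p hp q hq hpq ↦ by
    by_contra hne
    exact zero_lt_one.not_ge ((hunit hp hq hne).trans_eq (dist_eq_zero.2 hpq))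
  rw [← hinj.encard_image]
  refine encard_le_five_pow_of_one_le_dist ?_ (hinj.pairwise_image.2 hunit)
  refine forall_mem_image.2 fun p hp ↦ ?_
  rw [norm_smul, Real.norm_of_nonneg (by positivity), inv_mul_le_iff₀ hw, mul_comm]
  exact hf p hp

lemma encard_le_five_pow_of_dist_center_le {S : Set E} {r : E → ℝ} {c : E} {w : ℝ} (hw : 0 < w)
    (hwr : ∀ p ∈ S, w ≤ r p) (hc : ∀ p ∈ S, dist p c ≤ r p + w)
    (hr : S.Pairwise fun p q ↦ r p ≤ dist p q) :
    S.encard ≤ 5 ^ Module.finrank ℝ E := by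
  have hgap {p q : E} (hp : p ∈ S) (hq : q ∈ S) (hpq : p ≠ q) :
      max (2 * w) ‖p - c‖ - w ≤ dist (p - c) (q - c) := by
    have hmax : max (2 * w) ‖p - c‖ ≤ r p + w :=
      max_le (by linarith [hwr p hp]) (dist_eq_norm p c ▸ hc p hp)
    rw [dist_sub_right]
    linarith [hr hp hq hpq]
  refine encard_le_five_pow_of_le_dist (f := fun p ↦ radialRetraction (2 * w) (p - c)) hw
    (fun p _ ↦ norm_radialRetraction_le (by positivity) _) fun p hp q hq hpq ↦ ?_
  have := sub_le_dist_radialRetraction (by positivity) hw.le (hgap hp hq hpq)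
    (dist_comm (q - c) (p - c) ▸ hgap hq hp hpq.symm)
  linarith

lemma encard_biUnion_le_card_mul {ι α : Type*} (N : Finset ι) (f : ι → Set α) (n : ℕ∞)
    (h : ∀ i ∈ N, (f i).encard ≤ n) : (⋃ i ∈ N, f i).encard ≤ N.card * n := by
  classical
  induction N using Finset.induction_on with
  | empty => simp
  | insert i N hi ih =>
    rw [Finset.set_biUnion_insert, Finset.card_insert_of_notMem hi, Nat.cast_succ, add_mul,
      one_mul, add_comm]
    exact (encard_union_le _ _).trans (add_le_add (h i (Finset.mem_insert_self i N))
      (ih fun j hj ↦ h j (Finset.mem_insert_of_mem hj)))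

lemma encard_le_card_cover_mul_five_pow {S K : Set E} {r : E → ℝ} {w : ℝ} {N : Finset E}
    (hw : 0 < w) (hK : K ⊆ ⋃ c ∈ N, closedBall c w) (hwr : ∀ p ∈ S, w ≤ r p)
    (hSK : ∀ p ∈ S, (closedBall p (r p) ∩ K).Nonempty)
    (hr : S.Pairwise fun p q ↦ r p ≤ dist p q) :
    S.encard ≤ N.card * 5 ^ Module.finrank ℝ E := by
  have hcover : S ⊆ ⋃ c ∈ N, {p ∈ S | dist p c ≤ r p + w} := fun p hp ↦ by
    obtain ⟨x, hxp, hxK⟩ := hSK p hp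
    obtain ⟨c, hcN, hxc⟩ := mem_iUnion₂.1 (hK hxK)
    refine mem_biUnion hcN ⟨hp, (dist_triangle p x c).trans (add_le_add ?_ hxc)⟩
    rwa [dist_comm]
  refine (encard_le_encard hcover).trans (encard_biUnion_le_card_mul _ _ _ fun c _ ↦ ?_)
  exact encard_le_five_pow_of_dist_center_le hw (fun p hp ↦ hwr p hp.1) (fun p hp ↦ hp.2)
    (hr.mono (sep_subset _ _))

end Packing

section CubeCover

lemma exists_lt_mem_Icc_succ {α : Type*} [LinearOrder α] {f : ℕ → α} {m : ℕ} (hm : 0 < m) {x : α}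
    (hx : x ∈ Icc (f 0) (f m)) : ∃ k < m, x ∈ Icc (f k) (f (k + 1)) := by
  induction m, hm using Nat.le_induction with
  | base => exact ⟨0, Nat.one_pos, hx⟩
  | succ m _ ih =>
    rcases le_total x (f m) with hle | hge
    · obtain ⟨k, hk, hxk⟩ := ih ⟨hx.1, hle⟩
      exact ⟨k, hk.trans m.lt_succ_self, hxk⟩
    · exact ⟨m, m.lt_succ_self, hge, hx.2⟩

lemma exists_abs_sub_midpoint_le {a s x : ℝ} {m : ℕ} (hm : 0 < m) (hx : x ∈ Icc a (a + s)) :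
    ∃ k < m, |x - (a + (k + 1 / 2) * (s / m))| ≤ s / m / 2 := by
  have hend : a + s = a + m * (s / m) := by field_simp
  obtain ⟨k, hk, hxk⟩ := exists_lt_mem_Icc_succ (f := fun k ↦ a + k * (s / m)) hm
    (by simpa [← hend] using hx)
  push_cast at hxk
  exact ⟨k, hk, abs_le.2 ⟨by linarith [hxk.1], by linarith [hxk.2]⟩⟩

variable {ι : Type*} [Fintype ι]

lemma euclideanSpace_norm_le_sqrt_card_mul {x : EuclideanSpace ℝ ι} {δ : ℝ} (h : ∀ i, |x i| ≤ δ) :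
    ‖x‖ ≤ √(Fintype.card ι) * δ := by
  classical
  rcases isEmpty_or_nonempty ι with _ | _
  · simp [Subsingleton.elim x 0]
  refine ((EuclideanSpace.basisFun ι ℝ).norm_le_card_mul_iSup_norm_inner x).trans ?_
  gcongr
  exact ciSup_le fun i ↦ by simpa [EuclideanSpace.inner_single_left] using h i

lemma exists_finset_cube_subset_iUnion_closedBall (a : EuclideanSpace ℝ ι) (s : ℝ) {m : ℕ}
    (hm : 0 < m) :
    ∃ N : Finset (EuclideanSpace ℝ ι), N.card ≤ m ^ Fintype.card ι ∧
      {x : EuclideanSpace ℝ ι | ∀ i, x i ∈ Icc (a i) (a i + s)} ⊆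
        ⋃ c ∈ N, closedBall c (√(Fintype.card ι) * (s / m / 2)) := by
  classical
  let center (k : ι → ℕ) : EuclideanSpace ℝ ι :=
    WithLp.toLp 2 fun i ↦ a i + (k i + 1 / 2) * (s / m)
  refine ⟨(Fintype.piFinset fun _ ↦ Finset.range m).image center, ?_, fun x hx ↦ ?_⟩
  · simpa using Finset.card_image_le (s := Fintype.piFinset fun _ : ι ↦ Finset.range m)
      (f := center)
  · choose k hkm hk using fun i ↦ exists_abs_sub_midpoint_le hm (hx i)
    have hmem : k ∈ Fintype.piFinset fun _ ↦ Finset.range m :=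
      Fintype.mem_piFinset.2 fun i ↦ Finset.mem_range.2 (hkm i)
    refine mem_biUnion (Finset.mem_image_of_mem center hmem) ?_
    rw [mem_closedBall, dist_eq_norm]
    exact euclideanSpace_norm_le_sqrt_card_mul hk

end CubeCover

theorem candidate_list_size_general {ι : Type*} [Fintype ι] [Nonempty ι]
    {P : Set (EuclideanSpace ℝ ι)} {r : EuclideanSpace ℝ ι → ℝ}
    (hr : P.Pairwise fun p q ↦ r p ≤ dist p q)
    {s : ℝ} (hs : 0 < s) (a : EuclideanSpace ℝ ι) :
    {p ∈ P | s / 4 < r p ∧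
        (closedBall p (r p) ∩
          {x : EuclideanSpace ℝ ι | ∀ i, x i ∈ Icc (a i) (a i + s)}).Nonempty
      }.encard ≤ (5 ^ Fintype.card ι * ⌈2 * √(Fintype.card ι)⌉₊ ^ Fintype.card ι : ℕ) := by
  set m := ⌈2 * √(Fintype.card ι)⌉₊
  have hm : 0 < m := Nat.ceil_pos.2 (by positivity)
  have hradius : √(Fintype.card ι) * (s / m / 2) ≤ s / 4 := by
    have hceil : 2 * √(Fintype.card ι) ≤ m := Nat.le_ceil _
    calc √(Fintype.card ι) * (s / m / 2) = 2 * √(Fintype.card ι) / m * (s / 4) := by ring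
      _ ≤ 1 * (s / 4) := by gcongr; exact div_le_one_of_le₀ hceil m.cast_nonneg
      _ = s / 4 := one_mul _
  obtain ⟨N, hN, hcover⟩ := exists_finset_cube_subset_iUnion_closedBall a s hm
  have hcover' := hcover.trans (iUnion₂_mono fun c _ ↦ closedBall_subset_closedBall hradius)
  refine (encard_le_card_cover_mul_five_pow (by positivity) hcover' (fun p hp ↦ hp.2.1.le)
    (fun p hp ↦ hp.2.2) (hr.mono (sep_subset _ _))).trans ?_
  rw [finrank_euclideanSpace, mul_comm]
  exact_mod_cast Nat.mul_le_mul_left _ hN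

/-- quantitative Lemma 2 of the paper: for an axis-aligned cube of side
`s`, the number of points `p ∈ P` with nearest-neighbor distance `rp p > s/4` whose
empty ball meets the cube is at most `2 · 5^d · ⌈2√d⌉^d`. -/
theorem candidate_list_size (d : ℕ) (hd : 1 ≤ d)
    (P : Set (EuclideanSpace ℝ (Fin d))) (hPfin : P.Finite) (hP : 2 ≤ P.ncard)
    (rp : EuclideanSpace ℝ (Fin d) → ℝ)
    (hrp : ∀ p ∈ P, IsLeast ((dist p) '' (P \ {p})) (rp p))
    (s : ℝ) (hs : 0 < s) (a : EuclideanSpace ℝ (Fin d)) :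
    {p ∈ P | s / 4 < rp p ∧
        (closedBall p (rp p) ∩
          {x : EuclideanSpace ℝ (Fin d) | ∀ i, x i ∈ Icc (a i) (a i + s)}).Nonempty
      }.ncard ≤ 2 * 5 ^ d * ⌈2 * Real.sqrt d⌉₊ ^ d := by
  have : Nonempty (Fin d) := Fin.pos_iff_nonempty.1 hd
  have hempty : P.Pairwise fun p q ↦ rp p ≤ dist p q :=
    fun p hp q hq hpq ↦ (hrp p hp).2 ⟨q, ⟨hq, hpq.symm⟩, rfl⟩
  have hncard := (encard_le_coe_iff_finite_ncard_le.1 (candidate_list_size_general hempty hs a)).2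
  rw [Fintype.card_fin] at hncard
  exact hncard.trans (by gcongr; omega)
end
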